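/- Let V be a finite set with |V| = n ≥ 2 and let G be a simple graph on V in which every vertex has degree at most 2 (so every connected component of G is a path or a cycle). Let c be the number of connected components of G that contain a cycle (equivalently, components with as many edges as vertices). Then the minimum, over all spanning trees T of the complete graph on V, of the weight of T in the (1,2)-metric obtained from G equals 2(n − 1) − (|E(G)| − c). -/

import Mathlib

open SimpleGraph Finset
open scoped Classical

/-- The weight of the spanning tree `T` of the complete graph on `V` in the
`(1,2)`-metric obtained from `G` : each edge of `T` contributes `1` if it is an
edge of `G` and `2` otherwise. -/
noncomputable def metricWeight {V : Type*} [Fintype V] (G T : SimpleGraph V) : ℕ :=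
  ∑ e ∈ T.edgeFinset, if e ∈ G.edgeSet then 1 else 2

/-- The number of connected components of `G` that contain a cycle, i.e. whose induced
subgraph is not acyclic. -/
noncomputable def numCycleComponents {V : Type*} (G : SimpleGraph V) : ℕ :=
  Nat.card {K : G.ConnectedComponent // ¬ (G.induce K.supp).IsAcyclic}

/-!
Let `G` have `n` vertices. A tree `T` meets `G` in a forest with `k` components, hence with `n - k`
edges, so `T` weighs exactly `2 * (n - 1) - (n - k) = n + k - 2`. Here `k` is at least the number of
components of `G`, with equality when `T` extends a spanning forest of `G`.
A connected graph on `m` vertices with at most `m` edges has `m - 1` or `m` edges, according to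
whether it is acyclic; summing over the components of `G` shows that there are `n - |E(G)| + c`.
-/

section Components

variable {V : Type*}

lemma sum_eq_sum_connectedComponent [Fintype V] {M : Type*} [AddCommMonoid M] (G : SimpleGraph V)
    (f : V → M) : ∑ v, f v = ∑ K : G.ConnectedComponent, ∑ v : K.supp, f v := by
  rw [← Finset.sum_fiberwise (s := univ) (g := G.connectedComponentMk)]
  refine Finset.sum_congr rfl fun K _ => Finset.sum_subtype _ (fun v => ?_) f
  simp [ConnectedComponent.mem_supp_iff]

lemma card_eq_sum_card_supp [Fintype V] (G : SimpleGraph V) :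
    Nat.card V = ∑ K : G.ConnectedComponent, Nat.card K.supp := by
  simpa using sum_eq_sum_connectedComponent G fun _ => (1 : ℕ)

lemma degree_induce_supp [Fintype V] (G : SimpleGraph V) (K : G.ConnectedComponent)
    (v : K.supp) : (G.induce K.supp).degree v = G.degree v := by
  convert degree_induce_of_neighborSet_subset fun w hw => K.mem_supp_of_adj_mem_supp v.2 hw

lemma sum_degree_eq_two_mul_card_edgeSet [Fintype V] (G : SimpleGraph V) :
    ∑ v, G.degree v = 2 * Nat.card G.edgeSet := by
  rw [sum_degrees_eq_twice_card_edges, edgeFinset_card, Nat.card_eq_fintype_card]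

lemma card_edgeSet_eq_sum_card_edgeSet_induce_supp [Fintype V] (G : SimpleGraph V) :
    Nat.card G.edgeSet = ∑ K : G.ConnectedComponent, Nat.card (G.induce K.supp).edgeSet := by
  refine Nat.eq_of_mul_eq_mul_left two_pos ?_
  calc 2 * Nat.card G.edgeSet
    _ = ∑ K : G.ConnectedComponent, ∑ v : K.supp, G.degree v := by
      rw [← sum_degree_eq_two_mul_card_edgeSet, sum_eq_sum_connectedComponent G]
    _ = ∑ K : G.ConnectedComponent, 2 * Nat.card (G.induce K.supp).edgeSet := by
      refine Finset.sum_congr rfl fun K _ => ?_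
      rw [← sum_degree_eq_two_mul_card_edgeSet]
      exact Finset.sum_congr rfl fun v _ => (degree_induce_supp G K v).symm
    _ = 2 * ∑ K : G.ConnectedComponent, Nat.card (G.induce K.supp).edgeSet :=
      (Finset.mul_sum ..).symm

lemma card_edgeSet_add_card_connectedComponent [Fintype V] (G : SimpleGraph V) :
    Nat.card G.edgeSet + Nat.card G.ConnectedComponent =
      ∑ K : G.ConnectedComponent, (Nat.card (G.induce K.supp).edgeSet + 1) := by
  rw [Finset.sum_add_distrib, ← card_edgeSet_eq_sum_card_edgeSet_induce_supp, Finset.sum_const,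
    smul_eq_mul, mul_one, Finset.card_univ, Nat.card_eq_fintype_card (α := G.ConnectedComponent)]

lemma card_edgeSet_add_card_connectedComponent_of_isAcyclic [Finite V] {F : SimpleGraph V}
    (hF : F.IsAcyclic) :
    Nat.card F.edgeSet + Nat.card F.ConnectedComponent = Nat.card V := by
  cases nonempty_fintype V
  rw [card_edgeSet_add_card_connectedComponent, card_eq_sum_card_supp F]
  exact Finset.sum_congr rfl fun K _ =>
    (isTree_iff_connected_and_card.1 (hF.isTree_connectedComponent K)).2

lemma card_connectedComponent_congr {F G : SimpleGraph V} (h : F.Reachable = G.Reachable) :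
    Nat.card F.ConnectedComponent = Nat.card G.ConnectedComponent := by
  unfold SimpleGraph.ConnectedComponent
  rw [h]

end Components

section Pseudoforest

variable {V : Type*}

/-- A pseudoforest: each connected component has at most one cycle. For finite graphs this is
encoded as each component having at most as many edges as vertices; as `Nat.card` is `0` on
infinite types, the encoding is not meant for infinite components. -/
def IsPseudoforest (G : SimpleGraph V) : Prop :=
  ∀ K : G.ConnectedComponent, Nat.card (G.induce K.supp).edgeSet ≤ Nat.card K.supp

lemma two_mul_card_edgeSet_le_of_degree_le [Fintype V] {G : SimpleGraph V} {d : ℕ}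
    (hdeg : ∀ v, G.degree v ≤ d) : 2 * Nat.card G.edgeSet ≤ d * Nat.card V := by
  rw [← sum_degree_eq_two_mul_card_edgeSet, Nat.card_eq_fintype_card, mul_comm]
  exact Finset.sum_le_card_nsmul _ _ _ fun v _ => hdeg v

lemma isPseudoforest_of_degree_le_two [Fintype V] {G : SimpleGraph V}
    (hdeg : ∀ v, G.degree v ≤ 2) : IsPseudoforest G := fun K =>
  Nat.le_of_mul_le_mul_left
    (two_mul_card_edgeSet_le_of_degree_le fun v => (degree_induce_supp G K v).trans_le (hdeg v))
    two_pos

lemma card_edgeSet_add_one_of_connected_of_card_edgeSet_le [Finite V] {G : SimpleGraph V}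
    (hconn : G.Connected) (hle : Nat.card G.edgeSet ≤ Nat.card V) :
    Nat.card G.edgeSet + 1 = Nat.card V + if G.IsAcyclic then 0 else 1 := by
  split_ifs with hacyc
  · exact (isTree_iff_connected_and_card.1 ⟨hconn, hacyc⟩).2
  · have hne : Nat.card G.edgeSet + 1 ≠ Nat.card V := fun h =>
      hacyc (isTree_iff_connected_and_card.2 ⟨hconn, h⟩).isAcyclic
    have hge := hconn.card_vert_le_card_edgeSet_add_one
    omega

lemma numCycleComponents_eq_sum [Fintype V] (G : SimpleGraph V) :
    numCycleComponents G =
      ∑ K : G.ConnectedComponent, if (G.induce K.supp).IsAcyclic then 0 else 1 := by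
  rw [numCycleComponents, Nat.card_eq_fintype_card, Fintype.card_subtype, Finset.card_filter]
  exact Finset.sum_congr rfl fun K _ => ite_not ..

lemma card_edgeSet_add_card_connectedComponent_of_isPseudoforest [Finite V] {G : SimpleGraph V}
    (hG : IsPseudoforest G) :
    Nat.card G.edgeSet + Nat.card G.ConnectedComponent = Nat.card V + numCycleComponents G := by
  cases nonempty_fintype V
  rw [card_edgeSet_add_card_connectedComponent, card_eq_sum_card_supp G,
    numCycleComponents_eq_sum, ← Finset.sum_add_distrib]
  exact Finset.sum_congr rfl fun K _ =>
    card_edgeSet_add_one_of_connected_of_card_edgeSet_le K.connected_toSimpleGraph (hG K)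

end Pseudoforest

section SpanningTrees

variable {V : Type*}

lemma metricWeight_add_card_edgeSet_inf [Fintype V] (G T : SimpleGraph V) :
    metricWeight G T + Nat.card (T ⊓ G).edgeSet = 2 * Nat.card T.edgeSet := by
  have hinf : Nat.card (T ⊓ G).edgeSet =
      ∑ e ∈ T.edgeFinset, if e ∈ G.edgeSet then 1 else 0 := by
    rw [Nat.card_eq_fintype_card, ← edgeFinset_card, ← Finset.card_filter]
    congr 1
    ext e
    simp
  calc metricWeight G T + Nat.card (T ⊓ G).edgeSet
    _ = ∑ e ∈ T.edgeFinset, 2 := by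
      rw [hinf, metricWeight, ← Finset.sum_add_distrib]
      exact Finset.sum_congr rfl fun e _ => by split_ifs <;> rfl
    _ = 2 * Nat.card T.edgeSet := by
      rw [Finset.sum_const, smul_eq_mul, mul_comm, edgeFinset_card, Nat.card_eq_fintype_card]

lemma metricWeight_add_two_of_isTree [Fintype V] (G : SimpleGraph V) {T : SimpleGraph V}
    (hT : T.IsTree) :
    metricWeight G T + 2 = Nat.card V + Nat.card (T ⊓ G).ConnectedComponent := by
  have hweight := metricWeight_add_card_edgeSet_inf G T
  have htree := (isTree_iff_connected_and_card.1 hT).2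
  have hforest := card_edgeSet_add_card_connectedComponent_of_isAcyclic
    (hT.isAcyclic.anti (inf_le_left : T ⊓ G ≤ T))
  omega

lemma exists_isTree_reachable_inf_eq [Nonempty V] (G : SimpleGraph V) :
    ∃ T : SimpleGraph V, T.IsTree ∧ (T ⊓ G).Reachable = G.Reachable := by
  obtain ⟨F, hFG, hF, hreach⟩ := G.exists_isAcyclic_reachable_eq_le
  obtain ⟨T, hFT, -, hT⟩ := connected_top.exists_isTree_le_of_le_of_isAcyclic le_top hF
  refine ⟨T, hT, le_antisymm (fun _ _ h => h.mono inf_le_right) ?_⟩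
  rw [← hreach]
  exact fun _ _ h => h.mono (le_inf hFT hFG)

theorem isLeast_metricWeight [Fintype V] [Nonempty V] (G : SimpleGraph V) :
    IsLeast {m : ℤ | ∃ T : SimpleGraph V, T.IsTree ∧ (metricWeight G T : ℤ) = m}
      ((Nat.card V : ℤ) + Nat.card G.ConnectedComponent - 2) := by
  constructor
  · obtain ⟨T, hT, hreach⟩ := exists_isTree_reachable_inf_eq G
    have hweight := metricWeight_add_two_of_isTree G hT
    rw [card_connectedComponent_congr hreach] at hweight
    exact ⟨T, hT, by omega⟩
  · rintro _ ⟨T, hT, rfl⟩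
    have hweight := metricWeight_add_two_of_isTree G hT
    have hcomp := ConnectedComponent.card_le_card_of_le (inf_le_right : T ⊓ G ≤ G)
    omega

end SpanningTrees

theorem stmt_2_general {V : Type*} [Fintype V] [Nonempty V] (G : SimpleGraph V)
    (hG : IsPseudoforest G) :
    IsLeast {m : ℤ | ∃ T : SimpleGraph V, T.IsTree ∧ (metricWeight G T : ℤ) = m}
      (2 * ((Fintype.card V : ℤ) - 1) - ((G.edgeFinset.card : ℤ) - numCycleComponents G)) := by
  convert isLeast_metricWeight G using 1
  have hcount := card_edgeSet_add_card_connectedComponent_of_isPseudoforest hG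
  rw [Nat.card_eq_fintype_card, ← edgeFinset_card] at hcount
  rw [← Nat.card_eq_fintype_card]
  omega

/-- for a graph `G` on `n ≥ 2` vertices all of whose degrees are at most `2`
(a disjoint union of paths and cycles), letting `c` be the number of connected components
containing a cycle, the minimum weight of a spanning tree of the complete graph in the
`(1,2)`-metric obtained from `G` is `2(n-1) - (|E(G)| - c)`. -/
theorem stmt_2 {V : Type*} [Fintype V] (n c : ℕ) (hn : 2 ≤ n)
    (hcard : Fintype.card V = n) (G : SimpleGraph V)
    (hdeg : ∀ v : V, G.degree v ≤ 2)
    (hc : numCycleComponents G = c) :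
    IsLeast {m : ℤ | ∃ T : SimpleGraph V, T.IsTree ∧ (metricWeight G T : ℤ) = m}
      (2 * ((n : ℤ) - 1) - ((G.edgeFinset.card : ℤ) - c)) := by
  subst hcard hc
  have : Nonempty V := Fintype.card_pos_iff.1 (by omega)
  exact stmt_2_general G (isPseudoforest_of_degree_le_two hdeg)
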